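/- Let x ~ N(0, I_{d×d}) be standard Gaussian, ξ a noise independent of x, θ* ∈ R^d a fixed vector with ‖θ*‖₂ = 1, y = f(⟨x, θ*⟩, ξ) for a measurable f, and set η = E[y⟨x, θ*⟩]. Then argmin over θ ∈ R^d of E[(y − ⟨θ, x⟩)²] equals η θ*. -/

import Mathlib

open MeasureTheory ProbabilityTheory Real

noncomputable section

/-- Rearrangement of independence: if `A, B` are independent and `(A, B)` is independent of `C`,
then `(A, C)` is independent of `B`. -/
theorem indep_rearrange {Ω : Type*} [MeasurableSpace Ω] (P : Measure Ω) [IsProbabilityMeasure P]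
    (A B C : Ω → ℝ) (hA : Measurable A) (hB : Measurable B) (hC : Measurable C)
    (h1 : IndepFun A B P) (h2 : IndepFun (fun ω => (A ω, B ω)) C P) :
    IndepFun (fun ω => (A ω, C ω)) B P := by
  have hAC : IndepFun A C P := h2.comp measurable_fst measurable_id
  have e1 := (indepFun_iff_map_prod_eq_prod_map_map hA.aemeasurable hB.aemeasurable).1 h1
  have e2 := (indepFun_iff_map_prod_eq_prod_map_map (hA.prodMk hB).aemeasurable
    hC.aemeasurable).1 h2
  have e3 := (indepFun_iff_map_prod_eq_prod_map_map hA.aemeasurable hC.aemeasurable).1 hAC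
  refine (indepFun_iff_map_prod_eq_prod_map_map (hA.prodMk hC).aemeasurable hB.aemeasurable).2 ?_
  have : IsProbabilityMeasure (P.map A) := Measure.isProbabilityMeasure_map hA.aemeasurable
  have : IsProbabilityMeasure (P.map B) := Measure.isProbabilityMeasure_map hB.aemeasurable
  have : IsProbabilityMeasure (P.map C) := Measure.isProbabilityMeasure_map hC.aemeasurable
  rw [e3]
  rw [e1] at e2
  symm
  refine Measure.prod_eq_generateFrom (C := Set.image2 (· ×ˢ ·) {s : Set ℝ | MeasurableSet s}
    {t : Set ℝ | MeasurableSet t}) (D := {s : Set ℝ | MeasurableSet s}) generateFrom_prod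
    (@MeasurableSpace.generateFrom_measurableSet ℝ _) isPiSystem_prod
    MeasurableSpace.isPiSystem_measurableSet
    ⟨fun _ => Set.univ, fun _ => ⟨Set.univ, by simp, Set.univ, by simp, by simp⟩,
      fun _ => by simp, by simp [Set.iUnion_const]⟩
    ⟨fun _ => Set.univ, fun _ => by simp,
      fun _ => by simp, by simp [Set.iUnion_const]⟩ ?_
  rintro _ ⟨s, hs, t, ht, rfl⟩ u hu
  have e4 := congrArg (fun m => m ((s ×ˢ u) ×ˢ t)) e2
  simp only [Measure.prod_prod] at e4 ⊢
  rw [Measure.map_apply (by fun_prop) (by measurability)] at e4 ⊢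
  have : (fun a => ((A a, C a), B a)) ⁻¹' ((s ×ˢ t) ×ˢ u)
      = (fun ω => ((A ω, B ω), C ω)) ⁻¹' ((s ×ˢ u) ×ˢ t) := by
    ext ω; simp; tauto
  rw [this, e4]; ring

/-- Brillinger's identity: for standard Gaussian measurements `x ~ N(0, I_d)`, noise `ξ`
independent of `x`, a unit vector `θ*`, and `y = f(⟨x,θ*⟩, ξ)`, the vector `η θ*` with
`η = E[y ⟨x,θ*⟩]` minimizes `θ ↦ E[(y − ⟨θ,x⟩)²]`. -/
theorem brillinger_gaussian_lsq
    {Ω : Type*} [MeasurableSpace Ω] (P : Measure Ω) [IsProbabilityMeasure P]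
    {d : ℕ} (hd : 1 ≤ d)
    (x : Ω → Fin d → ℝ) (hxmeas : Measurable x)
    (hxgauss : Measure.map x P = Measure.pi fun _ : Fin d => gaussianReal 0 1)
    (ξ : Ω → ℝ) (hξmeas : Measurable ξ)
    (hindep : IndepFun x ξ P)
    (θs : Fin d → ℝ) (hθs : ∑ j, (θs j) ^ 2 = 1)
    (f : ℝ → ℝ → ℝ) (hf : Measurable fun p : ℝ × ℝ => f p.1 p.2)
    (y : Ω → ℝ) (hydef : ∀ ω, y ω = f (∑ j, x ω j * θs j) (ξ ω))
    (hinty : Integrable (fun ω => (y ω) ^ 2) P)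
    (hintall : ∀ θ : Fin d → ℝ, Integrable (fun ω => (y ω - ∑ j, θ j * x ω j) ^ 2) P)
    (hintη : Integrable (fun ω => y ω * ∑ j, x ω j * θs j) P) :
    ∀ θ : Fin d → ℝ,
      ∫ ω, (y ω - ∑ j, ((∫ ω', y ω' * ∑ k, x ω' k * θs k ∂P) * θs j) * x ω j) ^ 2 ∂P
        ≤ ∫ ω, (y ω - ∑ j, θ j * x ω j) ^ 2 ∂P := by
  have hm : ∀ i, Measurable fun ω => x ω i := fun i => (measurable_pi_apply i).comp hxmeas
  have hlaw : ∀ i, P.map (fun ω => x ω i) = gaussianReal 0 1 := fun i => by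
    have : (fun ω => x ω i) = (Function.eval i) ∘ x := rfl
    rw [this, ← Measure.map_map (measurable_pi_apply i) hxmeas, hxgauss]
    exact (measurePreserving_eval (fun _ : Fin d => gaussianReal 0 1) i).map_eq
  have hG1 : ∀ i, HasGaussianLaw (fun ω => x ω i) P := fun i =>
    ⟨by rw [hlaw i]; infer_instance⟩
  have hind : iIndepFun (fun i ω => x ω i) P := by
    rw [iIndepFun_iff_map_fun_eq_pi_map fun i => (hm i).aemeasurable]
    simp_rw [hlaw]
    exact hxgauss
  have hG : HasGaussianLaw x P := hind.hasGaussianLaw hG1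
  have hL2 : ∀ i, MemLp (fun ω => x ω i) 2 P := fun i => (hG1 i).memLp_two
  have hmean : ∀ i, ∫ ω, x ω i ∂P = 0 := fun i => by
    have h := integral_map (μ := P) (hm i).aemeasurable (f := fun z : ℝ => z) (by fun_prop)
    rw [hlaw i] at h
    simpa using h.symm
  have hvar : ∀ i, Var[fun ω => x ω i; P] = 1 := fun i => by
    have h := variance_map (μ := P) (X := fun z : ℝ => z) (Y := fun ω => x ω i)
      (by fun_prop) (hm i).aemeasurable
    rw [hlaw i] at h
    have h2 : Var[fun z : ℝ => z; gaussianReal 0 1] = 1 := by simp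
    rw [h2] at h
    exact h.symm
  set S : (Fin d → ℝ) → Ω → ℝ := fun a ω => ∑ j, a j * x ω j with hS
  have hSm : ∀ a, Measurable (S a) := fun a => by
    simp only [hS]; fun_prop
  have hSL : ∀ a, MemLp (S a) 2 P := fun a =>
    memLp_finsetSum _ fun i _ => (hL2 i).const_mul (a i)
  have hSmean : ∀ a, ∫ ω, S a ω ∂P = 0 := fun a => by
    simp only [hS]
    rw [integral_finsetSum _ fun i _ => ((hL2 i).integrable (by norm_num)).const_mul (a i)]
    simp [integral_const_mul, hmean]
  have hcov : ∀ a b, cov[S a, S b; P] = ∑ i, a i * b i := fun a b => by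
    simp only [hS]
    rw [covariance_fun_sum_fun_sum (fun i => (hL2 i).const_mul (a i))
      (fun i => (hL2 i).const_mul (b i))]
    refine Finset.sum_congr rfl fun i _ => ?_
    rw [Finset.sum_eq_single i]
    · rw [covariance_const_mul_left, covariance_const_mul_right,
        covariance_self (hm i).aemeasurable, hvar]; ring
    · intro j _ hj
      rw [covariance_const_mul_left, covariance_const_mul_right,
        (hind.indepFun hj.symm).covariance_eq_zero (hL2 i) (hL2 j)]; ring
    · simp
  have hSS : ∀ a b, ∫ ω, S a ω * S b ω ∂P = ∑ i, a i * b i := fun a b => by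
    have h := covariance_eq_sub (hSL a) (hSL b)
    rw [hcov, hSmean] at h
    simpa using h.symm
  have hθ : ∀ ω, ∑ j, x ω j * θs j = S θs ω := fun ω => by
    simp [hS, mul_comm]
  simp_rw [hθ] at hydef hintη ⊢
  have hym : Measurable y := by
    have : y = (fun p : ℝ × ℝ => f p.1 p.2) ∘ (fun ω => (S θs ω, ξ ω)) := funext hydef
    rw [this]
    exact hf.comp ((hSm θs).prodMk hξmeas)
  have hyL : MemLp y 2 P := (memLp_two_iff_integrable_sq hym.aestronglyMeasurable).2 hinty
  have hperp : ∀ b : Fin d → ℝ, ∑ i, θs i * b i = 0 → ∫ ω, y ω * S b ω ∂P = 0 := by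
    intro b hb
    have hGp : HasGaussianLaw (fun ω => (S θs ω, S b ω)) P := by
      let L : (Fin d → ℝ) → ((Fin d → ℝ) →L[ℝ] ℝ) := fun a =>
        ∑ j, a j • ContinuousLinearMap.proj (R := ℝ) (φ := fun _ : Fin d => ℝ) j
      have h := hG.map_fun ((L θs).prod (L b))
      have he : (fun ω => (S θs ω, S b ω)) = fun ω => ((L θs).prod (L b)) (x ω) := by
        funext ω
        simp [L, hS]
      rw [he]
      exact h
    have h1 : IndepFun (S θs) (S b) P :=
      hGp.indepFun_of_covariance_eq_zero (by rw [hcov, hb])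
    have h2 : IndepFun (fun ω => (S θs ω, S b ω)) ξ P := by
      have := hindep.comp (φ := fun v : Fin d → ℝ => (∑ j, θs j * v j, ∑ j, b j * v j))
        (ψ := id) (by fun_prop) measurable_id
      exact this
    have h3 := indep_rearrange P _ _ _ (hSm θs) (hSm b) hξmeas h1 h2
    have h4 : IndepFun y (S b) P := by
      have := h3.comp hf measurable_id
      have he : y = (fun p : ℝ × ℝ => f p.1 p.2) ∘ (fun ω => (S θs ω, ξ ω)) := funext hydef
      rw [he]
      exact this
    rw [h4.integral_fun_mul_eq_mul_integral hym.aestronglyMeasurable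
      (hSm b).aestronglyMeasurable, hSmean, mul_zero]
  have hadd : ∀ a b ω, S (a + b) ω = S a ω + S b ω := fun a b ω => by
    simp [hS, add_mul, Finset.sum_add_distrib]
  have hsmul : ∀ (c : ℝ) a ω, S (c • a) ω = c * S a ω := fun c a ω => by
    simp [hS, Finset.mul_sum, mul_assoc]
  set η : ℝ := ∫ ω, y ω * S θs ω ∂P with hη
  have hyS : ∀ a, Integrable (fun ω => y ω * S a ω) P := fun a => hyL.integrable_mul (hSL a)
  have hSSi : ∀ a b, Integrable (fun ω => S a ω * S b ω) P := fun a b =>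
    (hSL a).integrable_mul (hSL b)
  have key : ∀ a, ∫ ω, y ω * S a ω ∂P = η * ∑ i, θs i * a i := by
    intro a
    set c := ∑ i, θs i * a i with hc
    have hdec : a = c • θs + (a - c • θs) := by abel
    have hb : ∑ i, θs i * (a - c • θs) i = 0 := by
      have : ∀ i, θs i * (a - c • θs) i = θs i * a i - c * θs i ^ 2 := fun i => by
        simp; ring
      simp_rw [this]
      rw [Finset.sum_sub_distrib, ← Finset.mul_sum, hθs, ← hc]; ring
    have : ∀ ω, y ω * S a ω = c * (y ω * S θs ω) + y ω * S (a - c • θs) ω := fun ω => by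
      conv_lhs => rw [hdec, hadd, hsmul]
      ring
    simp_rw [this]
    rw [integral_add ((hyS θs).const_mul c) (hyS _), integral_const_mul, hperp _ hb, ← hη]
    ring
  intro θ
  have e1 : ∀ ω, ∑ j, η * θs j * x ω j = η * S θs ω := fun ω => by
    rw [← hsmul]; simp [hS]
  have e2 : ∀ ω, ∑ j, θ j * x ω j = η * S θs ω + S (θ - η • θs) ω := fun ω => by
    rw [← hsmul, ← hadd]; simp [hS]
  simp_rw [e1, e2]
  set v := θ - η • θs
  have e3 : ∀ ω, (y ω - (η * S θs ω + S v ω)) ^ 2 = (y ω - η * S θs ω) ^ 2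
      + ((-2) * (y ω * S v ω) + (2 * η) * (S θs ω * S v ω) + S v ω * S v ω) := fun ω => by ring
  have i0 : Integrable (fun ω => (y ω - η * S θs ω) ^ 2) P := by
    have := hintall (η • θs)
    refine this.congr (.of_forall fun ω => ?_)
    simp only [Pi.smul_apply, smul_eq_mul, e1]
  have i1 : Integrable (fun ω => (-2) * (y ω * S v ω)) P := (hyS v).const_mul _
  have i2 : Integrable (fun ω => (2 * η) * (S θs ω * S v ω)) P := (hSSi θs v).const_mul _
  have i12 : Integrable (fun ω => (-2) * (y ω * S v ω) + (2 * η) * (S θs ω * S v ω)) P :=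
    i1.add i2
  have i3 : Integrable (fun ω => (-2) * (y ω * S v ω) + (2 * η) * (S θs ω * S v ω)
      + S v ω * S v ω) P := i12.add (hSSi v v)
  simp_rw [e3]
  rw [integral_add i0 i3, integral_add i12 (hSSi v v),
    integral_add i1 i2, integral_const_mul, integral_const_mul, key, hSS θs v]
  have : 0 ≤ ∫ ω, S v ω * S v ω ∂P := integral_nonneg fun ω => mul_self_nonneg _
  linarith

end
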